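/- arXiv:math/0103141 — 13 statements merged into one kernel-verified Lean document; each statement's English description precedes it below -/
import Mathlib

section
/- Let 𝔤 be a finite-dimensional real Lie algebra with an inner product ⟨·,·⟩. For all X, Y ∈ 𝔤 one has ⟨R(X,Y)Y,X⟩ = (1/4)‖ad(X)ᵀY + ad(Y)ᵀX‖² − (3/4)‖[X,Y]‖² − ⟨ad(X)ᵀX, ad(Y)ᵀY⟩ − (1/2)⟨ad(X)ᵀY, [X,Y]⟩ − (1/2)⟨ad(Y)ᵀX, [Y,X]⟩, where R is the curvature of the right-invariant metric in right trivialization. -/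
open scoped RealInnerProductSpace

noncomputable section

/-- Levi-Civita covariant derivative of a right-invariant metric in right
trivialization, written through the bracket `br` and the transpose `adT` of `ad`:
`∇_X Y = (1/2) ad(X)ᵀ Y + (1/2) ad(Y)ᵀ X - (1/2) [X, Y]`. -/
def nablaR {L : Type*} [AddCommGroup L] [Module ℝ L]
    (br adT : L → L → L) (X Y : L) : L :=
  (1 / 2 : ℝ) • adT X Y + (1 / 2 : ℝ) • adT Y X - (1 / 2 : ℝ) • br X Y

/-- Curvature of a right-invariant metric in right trivialization:
`R(X,Y)Z = ∇_X ∇_Y Z - ∇_Y ∇_X Z + ∇_{[X,Y]} Z`. -/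
def curvR {L : Type*} [AddCommGroup L] [Module ℝ L]
    (br adT : L → L → L) (X Y Z : L) : L :=
  nablaR br adT X (nablaR br adT Y Z) - nablaR br adT Y (nablaR br adT X Z)
    + nablaR br adT (br X Y) Z

/-- The curvature of a right-invariant metric on a Lie group, in right
trivialization:
`⟨R(X,Y)Y,X⟩ = (1/4)‖ad(X)ᵀY + ad(Y)ᵀX‖² − (3/4)‖[X,Y]‖² − ⟨ad(X)ᵀX, ad(Y)ᵀY⟩
  − (1/2)⟨ad(X)ᵀY, [X,Y]⟩ − (1/2)⟨ad(Y)ᵀX, [Y,X]⟩`. -/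
theorem curvature_right_invariant_metric
    {G : Type*} [NormedAddCommGroup G] [InnerProductSpace ℝ G] [FiniteDimensional ℝ G]
    (brG : G →ₗ[ℝ] G →ₗ[ℝ] G)
    (hGalt : ∀ X : G, brG X X = 0)
    (hGjac : ∀ X Y Z : G, brG X (brG Y Z) + brG Y (brG Z X) + brG Z (brG X Y) = 0)
    (X Y : G) :
    ⟪curvR (fun a c => brG a c) (fun a c => LinearMap.adjoint (brG a) c) X Y Y, X⟫ =
      (1 / 4 : ℝ) * ‖LinearMap.adjoint (brG X) Y + LinearMap.adjoint (brG Y) X‖ ^ 2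
        - (3 / 4 : ℝ) * ‖brG X Y‖ ^ 2
        - ⟪LinearMap.adjoint (brG X) X, LinearMap.adjoint (brG Y) Y⟫
        - (1 / 2 : ℝ) * ⟪LinearMap.adjoint (brG X) Y, brG X Y⟫
        - (1 / 2 : ℝ) * ⟪LinearMap.adjoint (brG Y) X, brG Y X⟫ := by
  have hsk : ∀ A B : G, brG A B = - brG B A := by
    intro A B
    have h := hGalt (A + B)
    simp only [map_add, LinearMap.add_apply, hGalt, zero_add, add_zero] at h
    exact eq_neg_of_add_eq_zero_right h
  have hN : ∀ A B C : G,
      ⟪nablaR (fun a c => brG a c) (fun a c => LinearMap.adjoint (brG a) c) A B, C⟫ =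
        (1 / 2 : ℝ) * (⟪B, brG A C⟫ + ⟪A, brG B C⟫ - ⟪brG A B, C⟫) := by
    intro A B C
    simp only [nablaR, inner_add_left, inner_sub_left, real_inner_smul_left,
      LinearMap.adjoint_inner_left]
    ring
  have hM : ∀ A B C : G,
      ⟪nablaR (fun a c => brG a c) (fun a c => LinearMap.adjoint (brG a) c) A B, C⟫ =
      -⟪nablaR (fun a c => brG a c) (fun a c => LinearMap.adjoint (brG a) c) A C, B⟫ := by
    intro A B C
    rw [hN, hN, hsk C B, inner_neg_right, real_inner_comm C (brG A B),
      real_inner_comm B (brG A C)]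
    ring
  have hD : ∀ A : G,
      nablaR (fun a c => brG a c) (fun a c => LinearMap.adjoint (brG a) c) A A =
        LinearMap.adjoint (brG A) A := by
    intro A
    simp only [nablaR, hGalt, smul_zero, sub_zero, ← add_smul]
    norm_num
  have h3 := hN (brG X Y) Y X
  rw [hsk (brG X Y) X, hsk (brG X Y) Y, hsk Y X] at h3
  simp only [inner_neg_right, inner_neg_left, real_inner_self_eq_norm_sq] at h3
  have h2 : ⟪nablaR (fun a c => brG a c) (fun a c => LinearMap.adjoint (brG a) c) Y X,
      nablaR (fun a c => brG a c) (fun a c => LinearMap.adjoint (brG a) c) X Y⟫ =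
      (1 / 4 : ℝ) * ‖LinearMap.adjoint (brG X) Y + LinearMap.adjoint (brG Y) X‖ ^ 2
        - (1 / 4 : ℝ) * ‖brG X Y‖ ^ 2 := by
    have e1 : nablaR (fun a c => brG a c) (fun a c => LinearMap.adjoint (brG a) c) Y X =
      (1 / 2 : ℝ) • ((LinearMap.adjoint (brG X) Y + LinearMap.adjoint (brG Y) X) + brG X Y) := by
      simp only [nablaR]
      rw [hsk Y X]
      module
    have e2 : nablaR (fun a c => brG a c) (fun a c => LinearMap.adjoint (brG a) c) X Y =
      (1 / 2 : ℝ) • ((LinearMap.adjoint (brG X) Y + LinearMap.adjoint (brG Y) X) - brG X Y) := by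
      simp only [nablaR]
      module
    rw [e1, e2]
    generalize LinearMap.adjoint (brG X) Y + LinearMap.adjoint (brG Y) X = S
    rw [real_inner_smul_left, real_inner_smul_right, inner_add_left, inner_sub_right,
      inner_sub_right, real_inner_self_eq_norm_sq, real_inner_self_eq_norm_sq,
      real_inner_comm S (brG X Y)]
    ring
  rw [curvR, inner_add_left, inner_sub_left, hM X _ X, hM Y _ X, hD, hD, h2, h3,
    LinearMap.adjoint_inner_left (brG X) (brG X Y) Y,
    LinearMap.adjoint_inner_left (brG Y) (brG Y X) X, hsk Y X, map_neg, inner_neg_right,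
    real_inner_comm X (brG Y (brG X Y))]
  ring
end
end

section
/- Let 𝔤 ⋉ 𝔥 be the semidirect product of two finite-dimensional real Lie algebras with inner products, with action b and associated bilinear map h. A differentiable curve (u,α) : ℝ → 𝔤 × 𝔥 satisfies the geodesic equation of the right-invariant metric on 𝔤 ⋉ 𝔥, i.e. (u,α)'(t) = −ad(u(t),α(t))ᵀ(u(t),α(t)), if and only if u'(t) = −ad(u(t))ᵀu(t) + h(α(t),α(t)) and α'(t) = −ad(α(t))ᵀα(t) − b(u(t))ᵀα(t) for all t. -/
open scoped RealInnerProductSpace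

noncomputable section

/-- The semidirect product Lie bracket on `G × H` determined by the brackets of
`G` and `H` and the action `b : G → End(H)`. -/
def sdBr {G H : Type*} [AddCommGroup G] [Module ℝ G] [AddCommGroup H] [Module ℝ H]
    (brG : G →ₗ[ℝ] G →ₗ[ℝ] G) (brH : H →ₗ[ℝ] H →ₗ[ℝ] H)
    (b : G →ₗ[ℝ] H →ₗ[ℝ] H) (p q : G × H) : G × H :=
  (brG p.1 q.1, brH p.2 q.2 + b p.1 q.2 - b q.1 p.2)

/-- Geodesic equation on a semidirect product `𝔤 ⋉ 𝔥` with right invariant metric: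
`u_t = −ad(u)ᵀu + h(α,α)`, `α_t = −ad(α)ᵀα − b(u)ᵀα`. -/
theorem semidirect_geodesic_equation
    {G H : Type*}
    [NormedAddCommGroup G] [InnerProductSpace ℝ G] [FiniteDimensional ℝ G]
    [NormedAddCommGroup H] [InnerProductSpace ℝ H] [FiniteDimensional ℝ H]
    (brG : G →ₗ[ℝ] G →ₗ[ℝ] G) (brH : H →ₗ[ℝ] H →ₗ[ℝ] H)
    (hGalt : ∀ X : G, brG X X = 0)
    (hGjac : ∀ X Y Z : G, brG X (brG Y Z) + brG Y (brG Z X) + brG Z (brG X Y) = 0)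
    (hHalt : ∀ Y : H, brH Y Y = 0)
    (hHjac : ∀ X Y Z : H, brH X (brH Y Z) + brH Y (brH Z X) + brH Z (brH X Y) = 0)
    (b : G →ₗ[ℝ] H →ₗ[ℝ] H)
    (hbhom : ∀ X₁ X₂ : G, b (brG X₁ X₂) = b X₁ ∘ₗ b X₂ - b X₂ ∘ₗ b X₁)
    (hbder : ∀ (X : G) (Y₁ Y₂ : H), b X (brH Y₁ Y₂) = brH (b X Y₁) Y₂ + brH Y₁ (b X Y₂))
    (h : H → H → G)
    (hh : ∀ (Y₁ Y₂ : H) (X : G), ⟪h Y₁ Y₂, X⟫ = ⟪b X Y₁, Y₂⟫)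
    (adTP : G × H → G × H → G × H)
    (hadTP : ∀ p q r : G × H,
      ⟪(adTP p q).1, r.1⟫ + ⟪(adTP p q).2, r.2⟫ =
        ⟪q.1, (sdBr brG brH b p r).1⟫ + ⟪q.2, (sdBr brG brH b p r).2⟫)
    (u : ℝ → G) (α : ℝ → H) (hu : Differentiable ℝ u) (hα : Differentiable ℝ α) :
    (∀ t : ℝ, deriv (fun s => (u s, α s)) t = - adTP (u t, α t) (u t, α t)) ↔
      ((∀ t : ℝ, deriv u t = - LinearMap.adjoint (brG (u t)) (u t) + h (α t) (α t)) ∧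
        (∀ t : ℝ, deriv α t =
          - LinearMap.adjoint (brH (α t)) (α t) - LinearMap.adjoint (b (u t)) (α t))) := by
  have key1 : ∀ (x : G) (a : H), (adTP (x, a) (x, a)).1
      = LinearMap.adjoint (brG x) x - h a a := by
    intro x a
    refine ext_inner_right ℝ fun v => ?_
    have := hadTP (x, a) (x, a) (v, 0)
    simp only [sdBr, inner_zero_right, map_zero, add_zero, zero_sub, inner_neg_right] at this
    rw [this, inner_sub_left, LinearMap.adjoint_inner_left, hh, real_inner_comm a (b v a)]
    ring
  have key2 : ∀ (x : G) (a : H), (adTP (x, a) (x, a)).2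
      = LinearMap.adjoint (brH a) a + LinearMap.adjoint (b x) a := by
    intro x a
    refine ext_inner_right ℝ fun v => ?_
    have := hadTP (x, a) (x, a) (0, v)
    simp only [sdBr, inner_zero_right, map_zero, zero_add, LinearMap.zero_apply, sub_zero,
      inner_add_right] at this
    rw [this, inner_add_left, LinearMap.adjoint_inner_left, LinearMap.adjoint_inner_left]
  have hd : ∀ t, deriv (fun s => (u s, α s)) t = (deriv u t, deriv α t) := fun t =>
    ((hu t).hasDerivAt.prodMk (hα t).hasDerivAt).deriv
  rw [← forall_and]
  refine forall_congr' fun t => ?_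
  rw [hd, Prod.ext_iff, Prod.fst_neg, Prod.snd_neg, key1, key2, neg_sub, neg_add, ← sub_eq_add_neg,
    sub_eq_neg_add]
end
end

section
/- Let 𝔤 ⋉ 𝔥 be the semidirect product of two finite-dimensional real Lie algebras with inner products, with action b and associated bilinear map h, and let R̃, R^G, R^H denote the curvatures of the right-invariant metrics on 𝔤 ⋉ 𝔥, 𝔤, 𝔥 respectively. Then for all X₁,X₂ ∈ 𝔤 and Y₁,Y₂ ∈ 𝔥: ⟨R̃((X₁,Y₁),(X₂,Y₂))(X₂,Y₂),(X₁,Y₁)⟩ = ⟨R^G(X₁,X₂)X₂,X₁⟩ + ⟨R^H(Y₁,Y₂)Y₂,Y₁⟩ + (1/4)‖h(Y₁,Y₂)+h(Y₂,Y₁)‖² − ⟨h(Y₁,Y₁),h(Y₂,Y₂)⟩ − (1/2)⟨h(Y₁,Y₂)+h(Y₂,Y₁), ad(X₁)ᵀX₂+ad(X₂)ᵀX₁⟩ + ⟨h(Y₁,Y₁), ad(X₂)ᵀX₂⟩ + ⟨h(Y₂,Y₂), ad(X₁)ᵀX₁⟩ + (1/4)‖b(X₁)ᵀY₂+b(X₂)ᵀY₁‖²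 − (3/4)‖b(X₁)Y₂−b(X₂)Y₁‖² − ⟨b(X₁)ᵀY₁, b(X₂)ᵀY₂⟩ − (1/2)⟨b(X₁)ᵀY₁, b(X₂)Y₂⟩ − (1/2)⟨b(X₂)ᵀY₂, b(X₁)Y₁⟩ + ⟨b(X₁)ᵀY₂, b(X₂)Y₁⟩ + ⟨b(X₂)ᵀY₁, b(X₁)Y₂⟩ − (1/2)⟨b(X₁)ᵀY₂, b(X₁)Y₂⟩ − (1/2)⟨b(X₂)ᵀY₁, b(X₂)Y₁⟩ − ⟨ad(Y₁)ᵀY₁, b(X₂)ᵀY₂⟩ − ⟨ad(Y₂)ᵀY₂, b(X₁)ᵀY₁⟩ + (1/2)⟨ad(Y₁)ᵀY₂, b(X₁)ᵀY₂ + b(X₂)ᵀY₁ − b(X₁)Y₂ + b(X₂)Y₁⟩ + (1/2)⟨ad(Y₂)ᵀY₁, b(X₁)ᵀY₂ + b(X₂)ᵀY₁ − b(X₂)Y₁ + b(X₁)Y₂⟩ − (1/2)⟨[Y₁,Y₂], b(X₁)ᵀY₂ − b(X₂)ᵀY₁ + 3b(X₁)Y₂ − 3b(X₂)Y₁⟩.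 -/
open scoped RealInnerProductSpace

noncomputable section

theorem curv_aux {L : Type*} [AddCommGroup L] [Module ℝ L] (B : L → L → ℝ) (br T : L → L → L)
    (Bsymm : ∀ x y, B x y = B y x)
    (Badd : ∀ x y z, B (x + y) z = B x z + B y z)
    (Bsmul : ∀ (c : ℝ) x z, B (c • x) z = c * B x z)
    (bradd : ∀ x y z, br (x + y) z = br x z + br y z)
    (brsmul : ∀ (c : ℝ) x z, br (c • x) z = c • br x z)
    (anti : ∀ x y, br x y = - br y x)
    (hT : ∀ x y z, B (T x y) z = B y (br x z)) (x y : L) :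
    B (curvR br T x y y) x
      = (1/4) * B (T x y + T y x) (T x y + T y x) - B (T x x) (T y y)
        - (3/4) * B (br x y) (br x y) + (1/2) * B (T y x - T x y) (br x y) := by
  have Bneg : ∀ x z, B (-x) z = - B x z := by
    intro x z
    have := Bsmul (-1) x z
    simpa using this
  have Bneg' : ∀ x z, B x (-z) = - B x z := by
    intro x z
    rw [Bsymm, Bneg, Bsymm]
  have Bsub : ∀ x y z, B (x - y) z = B x z - B y z := by
    intro x y z
    rw [sub_eq_add_neg, Badd, Bneg, sub_eq_add_neg]
  have alt : ∀ x, br x x = 0 := by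
    intro x
    have h1 : (2 : ℝ) • br x x = 0 := by
      rw [two_smul]
      exact add_eq_zero_iff_eq_neg.mpr (anti x x)
    exact (smul_eq_zero.mp h1).resolve_left two_ne_zero
  have Bz : ∀ x, B x 0 = 0 := by
    intro x
    have := Bneg' x 0
    rw [neg_zero] at this
    linarith
  -- the pairing of the connection
  have key : ∀ x a c, B (nablaR br T x a) c
      = (1/2) * B a (br x c) + (1/2) * B x (br a c) - (1/2) * B (br x a) c := by
    intro x a c
    simp only [nablaR, Bsub, Badd, Bsmul, hT]
  have skew : ∀ x a c, B (nablaR br T x a) c = - B (nablaR br T x c) a := by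
    intro x a c
    rw [key, key, anti a c, Bneg', Bsymm (br x a), Bsymm (br x c)]
    ring
  have hself : ∀ x, nablaR br T x x = T x x := by
    intro x
    simp only [nablaR, alt, smul_zero, sub_zero]
    rw [← add_smul]; norm_num
  have e1 : B (nablaR br T x (nablaR br T y y)) x = - B (T x x) (T y y) := by
    rw [skew, hself, hself]
  have e2 : B (nablaR br T y (nablaR br T x y)) x
      = - B (nablaR br T y x) (nablaR br T x y) := skew _ _ _
  have Badd' : ∀ x y z, B z (x + y) = B z x + B z y := by
    intro x y z
    rw [Bsymm, Badd, Bsymm x, Bsymm y]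
  have Bsub' : ∀ x y z, B z (x - y) = B z x - B z y := by
    intro x y z
    rw [Bsymm, Bsub, Bsymm x, Bsymm y]
  have Bsmul' : ∀ (c : ℝ) x z, B z (c • x) = c * B z x := by
    intro c x z
    rw [Bsymm, Bsmul, Bsymm x]
  have e3 : B (nablaR br T (br x y) y) x
      = - (1/2) * B (br x y) (br x y) + (1/2) * B (T y x - T x y) (br x y) := by
    rw [key, Bsub, hT, hT, anti y x, anti (br x y) x, anti (br x y) y]
    simp only [Bneg', Bneg]
    rw [Bsymm (br y (br x y)) x]
    ring
  rw [curvR, Badd, Bsub, e1, e2, e3]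
  simp only [nablaR, Badd, Badd', Bsub, Bsub', Bsmul, Bsmul']
  rw [anti y x]
  simp only [Bneg, Bneg']
  rw [Bsymm (T y x) (T x y), Bsymm (br x y) (T x y), Bsymm (br x y) (T y x)]
  ring

theorem anti_aux {V : Type*} [AddCommGroup V] [Module ℝ V] (br : V →ₗ[ℝ] V →ₗ[ℝ] V)
    (alt : ∀ x, br x x = 0) (x y : V) : br x y = - br y x := by
  have := alt (x + y)
  simp only [map_add, LinearMap.add_apply, alt, zero_add, add_zero] at this
  first
  | exact eq_neg_of_add_eq_zero_left this
  | exact eq_neg_of_add_eq_zero_right this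

theorem curv_aux_inner {V : Type*} [NormedAddCommGroup V] [InnerProductSpace ℝ V]
    [FiniteDimensional ℝ V] (br : V →ₗ[ℝ] V →ₗ[ℝ] V) (alt : ∀ x, br x x = 0) (x y : V) :
    ⟪curvR (fun a c => br a c) (fun a c => LinearMap.adjoint (br a) c) x y y, x⟫
      = (1/4) * ⟪LinearMap.adjoint (br x) y + LinearMap.adjoint (br y) x,
          LinearMap.adjoint (br x) y + LinearMap.adjoint (br y) x⟫
        - ⟪LinearMap.adjoint (br x) x, LinearMap.adjoint (br y) y⟫
        - (3/4) * ⟪br x y, br x y⟫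
        + (1/2) * ⟪LinearMap.adjoint (br y) x - LinearMap.adjoint (br x) y, br x y⟫ := by
  refine curv_aux (fun a c : V => ⟪a, c⟫) (fun a c => br a c)
    (fun a c => LinearMap.adjoint (br a) c) ?_ ?_ ?_ ?_ ?_ ?_ ?_ x y
  · intro x y; exact real_inner_comm _ _
  · intro x y z; exact inner_add_left _ _ _
  · intro c x z; exact real_inner_smul_left _ _ _
  · intro x y z; simp
  · intro c x z; simp
  · intro x y; exact anti_aux br alt x y
  · intro x y z; exact LinearMap.adjoint_inner_left _ _ _

/-- Curvature formula for a semidirect product `𝔤 ⋉ 𝔥` with right invariant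
metric (Proposition 2 of the paper). -/
theorem semidirect_curvature_formula
    {G H : Type*}
    [NormedAddCommGroup G] [InnerProductSpace ℝ G] [FiniteDimensional ℝ G]
    [NormedAddCommGroup H] [InnerProductSpace ℝ H] [FiniteDimensional ℝ H]
    (brG : G →ₗ[ℝ] G →ₗ[ℝ] G) (brH : H →ₗ[ℝ] H →ₗ[ℝ] H)
    (hGalt : ∀ X : G, brG X X = 0)
    (hGjac : ∀ X Y Z : G, brG X (brG Y Z) + brG Y (brG Z X) + brG Z (brG X Y) = 0)
    (hHalt : ∀ Y : H, brH Y Y = 0)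
    (hHjac : ∀ X Y Z : H, brH X (brH Y Z) + brH Y (brH Z X) + brH Z (brH X Y) = 0)
    (b : G →ₗ[ℝ] H →ₗ[ℝ] H)
    (hbhom : ∀ X₁ X₂ : G, b (brG X₁ X₂) = b X₁ ∘ₗ b X₂ - b X₂ ∘ₗ b X₁)
    (hbder : ∀ (X : G) (Y₁ Y₂ : H), b X (brH Y₁ Y₂) = brH (b X Y₁) Y₂ + brH Y₁ (b X Y₂))
    (h : H → H → G)
    (hh : ∀ (Y₁ Y₂ : H) (X : G), ⟪h Y₁ Y₂, X⟫ = ⟪b X Y₁, Y₂⟫)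
    (adTP : G × H → G × H → G × H)
    (hadTP : ∀ p q r : G × H,
      ⟪(adTP p q).1, r.1⟫ + ⟪(adTP p q).2, r.2⟫ =
        ⟪q.1, (sdBr brG brH b p r).1⟫ + ⟪q.2, (sdBr brG brH b p r).2⟫)
    (X₁ X₂ : G) (Y₁ Y₂ : H) :
    ⟪(curvR (sdBr brG brH b) adTP (X₁, Y₁) (X₂, Y₂) (X₂, Y₂)).1, X₁⟫
      + ⟪(curvR (sdBr brG brH b) adTP (X₁, Y₁) (X₂, Y₂) (X₂, Y₂)).2, Y₁⟫ =
      ⟪curvR (fun a c => brG a c) (fun a c => LinearMap.adjoint (brG a) c) X₁ X₂ X₂, X₁⟫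
      + ⟪curvR (fun a c => brH a c) (fun a c => LinearMap.adjoint (brH a) c) Y₁ Y₂ Y₂, Y₁⟫
      + (1 / 4 : ℝ) * ‖h Y₁ Y₂ + h Y₂ Y₁‖ ^ 2
      - ⟪h Y₁ Y₁, h Y₂ Y₂⟫
      - (1 / 2 : ℝ) * ⟪h Y₁ Y₂ + h Y₂ Y₁,
          LinearMap.adjoint (brG X₁) X₂ + LinearMap.adjoint (brG X₂) X₁⟫
      + ⟪h Y₁ Y₁, LinearMap.adjoint (brG X₂) X₂⟫
      + ⟪h Y₂ Y₂, LinearMap.adjoint (brG X₁) X₁⟫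
      + (1 / 4 : ℝ) * ‖LinearMap.adjoint (b X₁) Y₂ + LinearMap.adjoint (b X₂) Y₁‖ ^ 2
      - (3 / 4 : ℝ) * ‖b X₁ Y₂ - b X₂ Y₁‖ ^ 2
      - ⟪LinearMap.adjoint (b X₁) Y₁, LinearMap.adjoint (b X₂) Y₂⟫
      - (1 / 2 : ℝ) * ⟪LinearMap.adjoint (b X₁) Y₁, b X₂ Y₂⟫
      - (1 / 2 : ℝ) * ⟪LinearMap.adjoint (b X₂) Y₂, b X₁ Y₁⟫
      + ⟪LinearMap.adjoint (b X₁) Y₂, b X₂ Y₁⟫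
      + ⟪LinearMap.adjoint (b X₂) Y₁, b X₁ Y₂⟫
      - (1 / 2 : ℝ) * ⟪LinearMap.adjoint (b X₁) Y₂, b X₁ Y₂⟫
      - (1 / 2 : ℝ) * ⟪LinearMap.adjoint (b X₂) Y₁, b X₂ Y₁⟫
      - ⟪LinearMap.adjoint (brH Y₁) Y₁, LinearMap.adjoint (b X₂) Y₂⟫
      - ⟪LinearMap.adjoint (brH Y₂) Y₂, LinearMap.adjoint (b X₁) Y₁⟫
      + (1 / 2 : ℝ) * ⟪LinearMap.adjoint (brH Y₁) Y₂,
          LinearMap.adjoint (b X₁) Y₂ + LinearMap.adjoint (b X₂) Y₁ - b X₁ Y₂ + b X₂ Y₁⟫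
      + (1 / 2 : ℝ) * ⟪LinearMap.adjoint (brH Y₂) Y₁,
          LinearMap.adjoint (b X₁) Y₂ + LinearMap.adjoint (b X₂) Y₁ - b X₂ Y₁ + b X₁ Y₂⟫
      - (1 / 2 : ℝ) * ⟪brH Y₁ Y₂,
          LinearMap.adjoint (b X₁) Y₂ - LinearMap.adjoint (b X₂) Y₁
            + (3 : ℝ) • b X₁ Y₂ - (3 : ℝ) • b X₂ Y₁⟫ := by
  have hT : ∀ p q : G × H, adTP p q =
      (LinearMap.adjoint (brG p.1) q.1 - h p.2 q.2,
        LinearMap.adjoint (brH p.2) q.2 + LinearMap.adjoint (b p.1) q.2) := by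
    intro p q
    apply Prod.ext
    · refine ext_inner_right ℝ fun v => ?_
      have := hadTP p q (v, 0)
      simp only [sdBr, inner_zero_right, map_zero, add_zero, zero_sub, inner_neg_right] at this
      rw [this, inner_sub_left, LinearMap.adjoint_inner_left, hh, real_inner_comm (q.2)]
      ring
    · refine ext_inner_right ℝ fun v => ?_
      have := hadTP p q (0, v)
      simp only [sdBr, inner_zero_right, map_zero, zero_add, LinearMap.zero_apply,
        sub_zero] at this
      rw [this, inner_add_left, LinearMap.adjoint_inner_left, LinearMap.adjoint_inner_left,
        inner_add_right]
  have main := curv_aux (fun p q : G × H => ⟪p.1, q.1⟫ + ⟪p.2, q.2⟫) (sdBr brG brH b) adTP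
    (by intro x y; simp only [real_inner_comm])
    (by intro x y z; simp only [Prod.fst_add, Prod.snd_add, inner_add_left]; ring)
    (by intro c x z; simp only [Prod.smul_fst, Prod.smul_snd, real_inner_smul_left]; ring)
    (by
      intro x y z
      simp only [sdBr, Prod.fst_add, Prod.snd_add, map_add, LinearMap.add_apply, Prod.mk_add_mk]
      congr 1
      abel)
    (by
      intro c x z
      simp only [sdBr, Prod.smul_fst, Prod.smul_snd, map_smul, LinearMap.smul_apply,
        Prod.smul_mk, smul_add, smul_sub])
    (by
      intro x y
      simp only [sdBr, Prod.neg_mk]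
      rw [anti_aux brG hGalt x.1, anti_aux brH hHalt x.2]
      congr 1
      abel)
    hadTP (X₁, Y₁) (X₂, Y₂)
  have hk1 : ⟪h Y₁ Y₂, brG X₁ X₂⟫ = ⟪LinearMap.adjoint (b X₁) Y₂, b X₂ Y₁⟫
      - ⟪LinearMap.adjoint (b X₂) Y₂, b X₁ Y₁⟫ := by
    rw [hh, hbhom, LinearMap.adjoint_inner_left, LinearMap.adjoint_inner_left, real_inner_comm]
    simp [inner_sub_right]
  have hk2 : ⟪h Y₂ Y₁, brG X₁ X₂⟫ = ⟪LinearMap.adjoint (b X₁) Y₁, b X₂ Y₂⟫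
      - ⟪LinearMap.adjoint (b X₂) Y₁, b X₁ Y₂⟫ := by
    rw [hh, hbhom, LinearMap.adjoint_inner_left, LinearMap.adjoint_inner_left, real_inner_comm]
    simp [inner_sub_right]
  refine main.trans ?_
  rw [curv_aux_inner brG hGalt, curv_aux_inner brH hHalt]
  simp only [hT, sdBr, ← real_inner_self_eq_norm_sq]
  clear main hT hadTP hh hbhom hbder hGjac hHjac
  generalize LinearMap.adjoint (brG X₁) X₂ = g12 at *
  generalize LinearMap.adjoint (brG X₂) X₁ = g21 at *
  generalize LinearMap.adjoint (brG X₁) X₁ = g11 at *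
  generalize LinearMap.adjoint (brG X₂) X₂ = g22 at *
  generalize LinearMap.adjoint (brH Y₁) Y₂ = k12 at *
  generalize LinearMap.adjoint (brH Y₂) Y₁ = k21 at *
  generalize LinearMap.adjoint (brH Y₁) Y₁ = k11 at *
  generalize LinearMap.adjoint (brH Y₂) Y₂ = k22 at *
  generalize LinearMap.adjoint (b X₁) Y₂ = t12 at *
  generalize LinearMap.adjoint (b X₂) Y₁ = t21 at *
  generalize LinearMap.adjoint (b X₁) Y₁ = t11 at *
  generalize LinearMap.adjoint (b X₂) Y₂ = t22 at *
  generalize b X₁ Y₁ = b11 at *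
  generalize b X₁ Y₂ = b12 at *
  generalize b X₂ Y₁ = b21 at *
  generalize b X₂ Y₂ = b22 at *
  generalize h Y₁ Y₁ = h11 at *
  generalize h Y₁ Y₂ = h12 at *
  generalize h Y₂ Y₁ = h21 at *
  generalize h Y₂ Y₂ = h22 at *
  generalize brG X₁ X₂ = u at *
  generalize brH Y₁ Y₂ = w at *
  simp only [Prod.mk_add_mk, Prod.mk_sub_mk, inner_add_left, inner_add_right, inner_sub_left,
    inner_sub_right, real_inner_smul_left, real_inner_smul_right]
  simp only [hk1, hk2]
  have c : ∀ x y : H, ⟪x, y⟫ = ⟪y, x⟫ := fun x y => real_inner_comm y x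
  have c' : ∀ x y : G, ⟪x, y⟫ = ⟪y, x⟫ := fun x y => real_inner_comm y x
  linarith [c' g12 g21, c' g12 h12, c' g12 h21, c' g21 h12, c' g21 h21, c' h12 h21,
    c' g11 h22, c' g22 h11, c k12 k21, c k12 t12, c k12 t21, c k21 t12, c k21 t21, c t12 t21,
    c b12 b21, c w b12, c w b21, c w t12, c w t21, c k12 b12, c k12 b21, c k21 b12, c k21 b21,
    c t12 b12, c t12 b21, c t21 b12, c t21 b21, c k11 t22, c k22 t11, c w k12, c w k21]
end
end

section
/- Let 𝔤 ⋉ 𝔥 be the semidirect product of two finite-dimensional real Lie algebras with inner products, with action b, and let R̃, R^G denote the curvatures of the right-invariant metrics on 𝔤 ⋉ 𝔥 and 𝔤. Then for all X₁, X₂ ∈ 𝔤: ⟨R̃((X₁,0),(X₂,0))(X₂,0),(X₁,0)⟩ = ⟨R^G(X₁,X₂)X₂,X₁⟩. -/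
open scoped RealInnerProductSpace

noncomputable section

/-- The sectional curvature numerator of a plane spanned by `(X₁,0)` and `(X₂,0)`
in the semidirect product equals that of the plane spanned by `X₁, X₂` in `𝔤`. -/
theorem semidirect_curvature_horizontal
    {G H : Type*}
    [NormedAddCommGroup G] [InnerProductSpace ℝ G] [FiniteDimensional ℝ G]
    [NormedAddCommGroup H] [InnerProductSpace ℝ H] [FiniteDimensional ℝ H]
    (brG : G →ₗ[ℝ] G →ₗ[ℝ] G) (brH : H →ₗ[ℝ] H →ₗ[ℝ] H)
    (hGalt : ∀ X : G, brG X X = 0)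
    (hGjac : ∀ X Y Z : G, brG X (brG Y Z) + brG Y (brG Z X) + brG Z (brG X Y) = 0)
    (hHalt : ∀ Y : H, brH Y Y = 0)
    (hHjac : ∀ X Y Z : H, brH X (brH Y Z) + brH Y (brH Z X) + brH Z (brH X Y) = 0)
    (b : G →ₗ[ℝ] H →ₗ[ℝ] H)
    (hbhom : ∀ X₁ X₂ : G, b (brG X₁ X₂) = b X₁ ∘ₗ b X₂ - b X₂ ∘ₗ b X₁)
    (hbder : ∀ (X : G) (Y₁ Y₂ : H), b X (brH Y₁ Y₂) = brH (b X Y₁) Y₂ + brH Y₁ (b X Y₂))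
    (h : H → H → G)
    (hh : ∀ (Y₁ Y₂ : H) (X : G), ⟪h Y₁ Y₂, X⟫ = ⟪b X Y₁, Y₂⟫)
    (adTP : G × H → G × H → G × H)
    (hadTP : ∀ p q r : G × H,
      ⟪(adTP p q).1, r.1⟫ + ⟪(adTP p q).2, r.2⟫ =
        ⟪q.1, (sdBr brG brH b p r).1⟫ + ⟪q.2, (sdBr brG brH b p r).2⟫)
    (X₁ X₂ : G) :
    ⟪(curvR (sdBr brG brH b) adTP (X₁, (0 : H)) (X₂, 0) (X₂, 0)).1, X₁⟫
      + ⟪(curvR (sdBr brG brH b) adTP (X₁, (0 : H)) (X₂, 0) (X₂, 0)).2, (0 : H)⟫ =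
      ⟪curvR (fun a c => brG a c) (fun a c => LinearMap.adjoint (brG a) c) X₁ X₂ X₂, X₁⟫ := by
  have key : ∀ X Z : G, adTP (X, (0 : H)) (Z, 0) = (LinearMap.adjoint (brG X) Z, 0) := by
    intro X Z
    refine Prod.ext ?_ ?_
    · refine ext_inner_right ℝ fun v => ?_
      have := hadTP (X, 0) (Z, 0) (v, 0)
      simp only [sdBr, inner_zero_left, inner_zero_right, add_zero] at this
      rw [this, LinearMap.adjoint_inner_left]
    · refine ext_inner_right ℝ fun v => ?_
      have := hadTP (X, 0) (Z, 0) (0, v)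
      simp only [sdBr, map_zero, inner_zero_left, inner_zero_right, add_zero, zero_add] at this
      rw [this, inner_zero_left]
  have keyb : ∀ X Z : G, sdBr brG brH b (X, (0 : H)) (Z, 0) = (brG X Z, 0) := by
    intro X Z
    simp [sdBr]
  have keyn : ∀ X Z : G, nablaR (sdBr brG brH b) adTP (X, (0 : H)) (Z, 0) =
      (nablaR (fun a c => brG a c) (fun a c => LinearMap.adjoint (brG a) c) X Z, 0) := by
    intro X Z
    simp only [nablaR, key, keyb]
    ext <;> simp
  simp only [curvR, keyn, keyb, inner_zero_right, add_zero, Prod.fst_add, Prod.fst_sub]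
end
end

section
/- Let 𝔤 ⋉ 𝔥 be the semidirect product of two finite-dimensional real Lie algebras with inner products, with action b, associated bilinear map h, and curvature R̃ of the right-invariant metric. Then for all X ∈ 𝔤 and Y ∈ 𝔥: ⟨R̃((X,0),(0,Y))(0,Y),(X,0)⟩ = ⟨h(Y,Y), ad(X)ᵀX⟩ − (1/4)‖(b(X)+b(X)ᵀ)Y‖² + (1/2)‖b(X)ᵀY‖² − (1/2)‖b(X)Y‖². -/
open scoped RealInnerProductSpace

noncomputable section

/-- The sectional curvature numerator of a mixed plane spanned by `(X,0)` and
`(0,Y)` in the semidirect product: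
`⟨h(Y,Y), ad(X)ᵀX⟩ − (1/4)‖(b(X)+b(X)ᵀ)Y‖² + (1/2)‖b(X)ᵀY‖² − (1/2)‖b(X)Y‖²`. -/
theorem semidirect_curvature_mixed
    {G H : Type*}
    [NormedAddCommGroup G] [InnerProductSpace ℝ G] [FiniteDimensional ℝ G]
    [NormedAddCommGroup H] [InnerProductSpace ℝ H] [FiniteDimensional ℝ H]
    (brG : G →ₗ[ℝ] G →ₗ[ℝ] G) (brH : H →ₗ[ℝ] H →ₗ[ℝ] H)
    (hGalt : ∀ X : G, brG X X = 0)
    (hGjac : ∀ X Y Z : G, brG X (brG Y Z) + brG Y (brG Z X) + brG Z (brG X Y) = 0)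
    (hHalt : ∀ Y : H, brH Y Y = 0)
    (hHjac : ∀ X Y Z : H, brH X (brH Y Z) + brH Y (brH Z X) + brH Z (brH X Y) = 0)
    (b : G →ₗ[ℝ] H →ₗ[ℝ] H)
    (hbhom : ∀ X₁ X₂ : G, b (brG X₁ X₂) = b X₁ ∘ₗ b X₂ - b X₂ ∘ₗ b X₁)
    (hbder : ∀ (X : G) (Y₁ Y₂ : H), b X (brH Y₁ Y₂) = brH (b X Y₁) Y₂ + brH Y₁ (b X Y₂))
    (h : H → H → G)
    (hh : ∀ (Y₁ Y₂ : H) (X : G), ⟪h Y₁ Y₂, X⟫ = ⟪b X Y₁, Y₂⟫)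
    (adTP : G × H → G × H → G × H)
    (hadTP : ∀ p q r : G × H,
      ⟪(adTP p q).1, r.1⟫ + ⟪(adTP p q).2, r.2⟫ =
        ⟪q.1, (sdBr brG brH b p r).1⟫ + ⟪q.2, (sdBr brG brH b p r).2⟫)
    (X : G) (Y : H) :
    ⟪(curvR (sdBr brG brH b) adTP (X, (0 : H)) ((0 : G), Y) ((0 : G), Y)).1, X⟫
      + ⟪(curvR (sdBr brG brH b) adTP (X, (0 : H)) ((0 : G), Y) ((0 : G), Y)).2, (0 : H)⟫ =
      ⟪h Y Y, LinearMap.adjoint (brG X) X⟫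
        - (1 / 4 : ℝ) * ‖b X Y + LinearMap.adjoint (b X) Y‖ ^ 2
        + (1 / 2 : ℝ) * ‖LinearMap.adjoint (b X) Y‖ ^ 2
        - (1 / 2 : ℝ) * ‖b X Y‖ ^ 2 := by
  have hG : ∀ A B : G, brG A B = - brG B A := by
    intro A B
    have h1 := hGalt (A + B)
    simp only [map_add, LinearMap.add_apply, hGalt, zero_add, add_zero] at h1
    exact eq_neg_of_add_eq_zero_right h1
  have hT : ∀ p q : G × H, adTP p q =
      (LinearMap.adjoint (brG p.1) q.1 - h p.2 q.2,
        LinearMap.adjoint (brH p.2) q.2 + LinearMap.adjoint (b p.1) q.2) := by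
    intro p q
    refine Prod.ext ?_ ?_
    · refine ext_inner_right ℝ fun r => ?_
      have := hadTP p q (r, 0)
      simp [sdBr] at this
      simp only [inner_sub_left, LinearMap.adjoint_inner_left, hh, this,
        real_inner_comm q.2]
      ring
    · refine ext_inner_right ℝ fun r => ?_
      have := hadTP p q (0, r)
      simp [sdBr, inner_add_right] at this
      simp only [inner_add_left, LinearMap.adjoint_inner_left, this]
  have h0l : ∀ W : H, h 0 W = 0 := fun W => ext_inner_right ℝ fun r => by simp [hh]
  have h0r : ∀ W : H, h W 0 = 0 := fun W => ext_inner_right ℝ fun r => by simp [hh]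
  have e1 : ⟪h Y Y, LinearMap.adjoint (brG X) X⟫ = ⟪brG X (h Y Y), X⟫ := by
    rw [LinearMap.adjoint_inner_right]
  have e2 : ⟪brG (h Y Y) X, X⟫ = - ⟪brG X (h Y Y), X⟫ := by
    rw [hG, inner_neg_left]
  rw [e1]
  simp only [curvR, nablaR, hT, sdBr]
  simp only [← real_inner_self_eq_norm_sq]
  simp [h0l, h0r, hh, inner_add_left, inner_sub_left, inner_smul_left, inner_add_right,
    inner_sub_right, inner_smul_right, LinearMap.adjoint_inner_left, hGalt, hHalt]
  have e3 : ⟪b X (b X Y), Y⟫ = ⟪b X Y, LinearMap.adjoint (b X) Y⟫ :=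
    (LinearMap.adjoint_inner_right _ _ _).symm
  have e4 : ⟪b X (LinearMap.adjoint (b X) Y), Y⟫ = ‖LinearMap.adjoint (b X) Y‖ ^ 2 := by
    rw [← real_inner_self_eq_norm_sq, LinearMap.adjoint_inner_right]
  rw [real_inner_comm] at e2
  rw [e2, e3, e4, norm_add_sq_real]
  ring
end
end

section
/- Let 𝔤 ⋉ 𝔥 be the semidirect product of two finite-dimensional real Lie algebras with inner products, with action b, associated bilinear map h, curvature R̃ of the right-invariant metric, and R^H the curvature on 𝔥. Then for all Y₁, Y₂ ∈ 𝔥: ⟨R̃((0,Y₁),(0,Y₂))(0,Y₂),(0,Y₁)⟩ = ⟨R^H(Y₁,Y₂)Y₂,Y₁⟩ + (1/4)‖h(Y₁,Y₂)+h(Y₂,Y₁)‖² − ⟨h(Y₁,Y₁),h(Y₂,Y₂)⟩. -/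
open scoped RealInnerProductSpace

noncomputable section

/-- The sectional curvature numerator of a plane spanned by `(0,Y₁)` and `(0,Y₂)`
in the semidirect product:
`⟨R^H(Y₁,Y₂)Y₂,Y₁⟩ + (1/4)‖h(Y₁,Y₂)+h(Y₂,Y₁)‖² − ⟨h(Y₁,Y₁),h(Y₂,Y₂)⟩`. -/
theorem semidirect_curvature_vertical
    {G H : Type*}
    [NormedAddCommGroup G] [InnerProductSpace ℝ G] [FiniteDimensional ℝ G]
    [NormedAddCommGroup H] [InnerProductSpace ℝ H] [FiniteDimensional ℝ H]
    (brG : G →ₗ[ℝ] G →ₗ[ℝ] G) (brH : H →ₗ[ℝ] H →ₗ[ℝ] H)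
    (hGalt : ∀ X : G, brG X X = 0)
    (hGjac : ∀ X Y Z : G, brG X (brG Y Z) + brG Y (brG Z X) + brG Z (brG X Y) = 0)
    (hHalt : ∀ Y : H, brH Y Y = 0)
    (hHjac : ∀ X Y Z : H, brH X (brH Y Z) + brH Y (brH Z X) + brH Z (brH X Y) = 0)
    (b : G →ₗ[ℝ] H →ₗ[ℝ] H)
    (hbhom : ∀ X₁ X₂ : G, b (brG X₁ X₂) = b X₁ ∘ₗ b X₂ - b X₂ ∘ₗ b X₁)
    (hbder : ∀ (X : G) (Y₁ Y₂ : H), b X (brH Y₁ Y₂) = brH (b X Y₁) Y₂ + brH Y₁ (b X Y₂))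
    (h : H → H → G)
    (hh : ∀ (Y₁ Y₂ : H) (X : G), ⟪h Y₁ Y₂, X⟫ = ⟪b X Y₁, Y₂⟫)
    (adTP : G × H → G × H → G × H)
    (hadTP : ∀ p q r : G × H,
      ⟪(adTP p q).1, r.1⟫ + ⟪(adTP p q).2, r.2⟫ =
        ⟪q.1, (sdBr brG brH b p r).1⟫ + ⟪q.2, (sdBr brG brH b p r).2⟫)
    (Y₁ Y₂ : H) :
    ⟪(curvR (sdBr brG brH b) adTP ((0 : G), Y₁) ((0 : G), Y₂) ((0 : G), Y₂)).1, (0 : G)⟫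
      + ⟪(curvR (sdBr brG brH b) adTP ((0 : G), Y₁) ((0 : G), Y₂) ((0 : G), Y₂)).2, Y₁⟫ =
      ⟪curvR (fun a c => brH a c) (fun a c => LinearMap.adjoint (brH a) c) Y₁ Y₂ Y₂, Y₁⟫
        + (1 / 4 : ℝ) * ‖h Y₁ Y₂ + h Y₂ Y₁‖ ^ 2
        - ⟪h Y₁ Y₁, h Y₂ Y₂⟫ := by
  have key : ∀ p q : G × H, adTP p q =
      (LinearMap.adjoint (brG p.1) q.1 - h p.2 q.2,
        LinearMap.adjoint (brH p.2) q.2 + LinearMap.adjoint (b p.1) q.2) := by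
    intro p q
    refine Prod.ext ?_ ?_
    · refine ext_inner_right ℝ fun X => ?_
      have h1 := hadTP p q (X, 0)
      simp only [sdBr, map_zero, inner_zero_right, add_zero, zero_sub, inner_neg_right] at h1
      rw [h1, inner_sub_left, LinearMap.adjoint_inner_left, hh, real_inner_comm (b X p.2)]
      ring
    · refine ext_inner_right ℝ fun Y => ?_
      have h1 := hadTP p q (0, Y)
      simp only [sdBr, map_zero, inner_zero_right, zero_add, LinearMap.zero_apply, sub_zero,
        inner_add_right] at h1
      rw [h1, inner_add_left, LinearMap.adjoint_inner_left, LinearMap.adjoint_inner_left]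
  have e1 : ‖h Y₁ Y₂ + h Y₂ Y₁‖ ^ 2 = ⟪b (h Y₁ Y₂) Y₁, Y₂⟫ + ⟪b (h Y₂ Y₁) Y₁, Y₂⟫
      + ⟪b (h Y₁ Y₂) Y₂, Y₁⟫ + ⟪b (h Y₂ Y₁) Y₂, Y₁⟫ := by
    rw [← real_inner_self_eq_norm_sq, inner_add_left, inner_add_right, inner_add_right,
      hh, hh, hh, hh]
    ring
  rw [e1, hh]
  simp only [curvR, nablaR, key, sdBr, inner_zero_right, Prod.fst_add, Prod.snd_add,
    Prod.fst_sub, Prod.snd_sub, Prod.smul_fst, Prod.smul_snd, map_zero, map_add, map_sub,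
    map_smul, map_neg, LinearMap.zero_apply, LinearMap.add_apply, LinearMap.sub_apply,
    LinearMap.smul_apply, LinearMap.neg_apply, inner_add_left, inner_sub_left,
    inner_neg_left, real_inner_smul_left, LinearMap.adjoint_inner_left, inner_add_right,
    inner_sub_right, inner_neg_right, real_inner_smul_right, zero_sub, sub_zero, add_zero,
    zero_add, map_smulₛₗ, conj_trivial, smul_zero, inner_zero_left]
  rw [real_inner_comm (b (h Y₂ Y₂) Y₁) Y₁] 
  simp only [real_inner_comm Y₁, real_inner_comm Y₂]
  ring
end
end

section
/- Let 𝔤 ⋉ 𝔥 be the semidirect product of two finite-dimensional real Lie algebras with inner products, with action b such that each b(X) is skew-adjoint (the isometric case). Then a differentiable curve (u,α) : ℝ → 𝔤 × 𝔥 satisfies the geodesic equation (u,α)' = −ad(u,α)ᵀ(u,α) of the right-invariant metric on 𝔤 ⋉ 𝔥 if and only if u'(t) = −ad(u(t))ᵀu(t) and α'(t) = −ad(α(t))ᵀα(t) + b(u(t))α(t) for all t. -/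
open scoped RealInnerProductSpace

noncomputable section

/-- Geodesic equation on an isometric semidirect product `𝔤 ⋉ 𝔥`:
`u_t = −ad(u)ᵀu`, `α_t = −ad(α)ᵀα + b(u)α`. -/
theorem semidirect_geodesic_equation_isometric
    {G H : Type*}
    [NormedAddCommGroup G] [InnerProductSpace ℝ G] [FiniteDimensional ℝ G]
    [NormedAddCommGroup H] [InnerProductSpace ℝ H] [FiniteDimensional ℝ H]
    (brG : G →ₗ[ℝ] G →ₗ[ℝ] G) (brH : H →ₗ[ℝ] H →ₗ[ℝ] H)
    (hGalt : ∀ X : G, brG X X = 0)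
    (hGjac : ∀ X Y Z : G, brG X (brG Y Z) + brG Y (brG Z X) + brG Z (brG X Y) = 0)
    (hHalt : ∀ Y : H, brH Y Y = 0)
    (hHjac : ∀ X Y Z : H, brH X (brH Y Z) + brH Y (brH Z X) + brH Z (brH X Y) = 0)
    (b : G →ₗ[ℝ] H →ₗ[ℝ] H)
    (hbhom : ∀ X₁ X₂ : G, b (brG X₁ X₂) = b X₁ ∘ₗ b X₂ - b X₂ ∘ₗ b X₁)
    (hbder : ∀ (X : G) (Y₁ Y₂ : H), b X (brH Y₁ Y₂) = brH (b X Y₁) Y₂ + brH Y₁ (b X Y₂))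
    (hskew : ∀ (X : G) (Y₁ Y₂ : H), ⟪b X Y₁, Y₂⟫ + ⟪Y₁, b X Y₂⟫ = 0)
    (adTP : G × H → G × H → G × H)
    (hadTP : ∀ p q r : G × H,
      ⟪(adTP p q).1, r.1⟫ + ⟪(adTP p q).2, r.2⟫ =
        ⟪q.1, (sdBr brG brH b p r).1⟫ + ⟪q.2, (sdBr brG brH b p r).2⟫)
    (u : ℝ → G) (α : ℝ → H) (hu : Differentiable ℝ u) (hα : Differentiable ℝ α) :
    (∀ t : ℝ, deriv (fun s => (u s, α s)) t = - adTP (u t, α t) (u t, α t)) ↔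
      ((∀ t : ℝ, deriv u t = - LinearMap.adjoint (brG (u t)) (u t)) ∧
        (∀ t : ℝ, deriv α t = - LinearMap.adjoint (brH (α t)) (α t) + b (u t) (α t))) := by
  have key : ∀ (X : G) (Y : H), adTP (X, Y) (X, Y) =
      (LinearMap.adjoint (brG X) X, LinearMap.adjoint (brH Y) Y - b X Y) := by
    intro X Y
    refine Prod.ext ?_ ?_
    · refine ext_inner_right ℝ fun v => ?_
      have h := hadTP (X, Y) (X, Y) (v, 0)
      have h2 := hskew v Y Y
      rw [real_inner_comm] at h2
      simp only [sdBr, map_zero, inner_zero_right, add_zero, zero_sub, inner_neg_right] at h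
      simp only [LinearMap.adjoint_inner_left]
      linarith
    · refine ext_inner_right ℝ fun v => ?_
      have h := hadTP (X, Y) (X, Y) (0, v)
      have h2 := hskew X Y v
      simp only [sdBr, map_zero, inner_zero_right, zero_add, LinearMap.zero_apply, sub_zero,
        inner_add_right] at h
      simp only [LinearMap.adjoint_inner_left, inner_sub_left]
      linarith
  have hd : ∀ t, deriv (fun s => (u s, α s)) t = (deriv u t, deriv α t) := fun t =>
    ((hu t).hasDerivAt.prodMk (hα t).hasDerivAt).deriv
  rw [← forall_and]
  refine forall_congr' fun t => ?_
  rw [hd, key, Prod.neg_mk, Prod.mk.injEq, neg_sub', sub_neg_eq_add]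
end
end

section
/- Let 𝔤 ⋉ 𝔥 be the semidirect product of two finite-dimensional real Lie algebras with inner products, with action b such that each b(X) is skew-adjoint (the isometric case), and let R̃, R^G, R^H denote the curvatures of the right-invariant metrics on 𝔤 ⋉ 𝔥, 𝔤, 𝔥 respectively. Then for all X₁,X₂ ∈ 𝔤 and Y₁,Y₂ ∈ 𝔥: ⟨R̃((X₁,Y₁),(X₂,Y₂))(X₂,Y₂),(X₁,Y₁)⟩ = ⟨R^G(X₁,X₂)X₂,X₁⟩ + ⟨R^H(Y₁,Y₂)Y₂,Y₁⟩. -/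
open scoped RealInnerProductSpace

noncomputable section

/-- In the isometric case the curvature of the semidirect product is the sum of
the curvatures of the two factors (Proposition 4 of the paper). -/
theorem semidirect_curvature_isometric
    {G H : Type*}
    [NormedAddCommGroup G] [InnerProductSpace ℝ G] [FiniteDimensional ℝ G]
    [NormedAddCommGroup H] [InnerProductSpace ℝ H] [FiniteDimensional ℝ H]
    (brG : G →ₗ[ℝ] G →ₗ[ℝ] G) (brH : H →ₗ[ℝ] H →ₗ[ℝ] H)
    (hGalt : ∀ X : G, brG X X = 0)
    (hGjac : ∀ X Y Z : G, brG X (brG Y Z) + brG Y (brG Z X) + brG Z (brG X Y) = 0)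
    (hHalt : ∀ Y : H, brH Y Y = 0)
    (hHjac : ∀ X Y Z : H, brH X (brH Y Z) + brH Y (brH Z X) + brH Z (brH X Y) = 0)
    (b : G →ₗ[ℝ] H →ₗ[ℝ] H)
    (hbhom : ∀ X₁ X₂ : G, b (brG X₁ X₂) = b X₁ ∘ₗ b X₂ - b X₂ ∘ₗ b X₁)
    (hbder : ∀ (X : G) (Y₁ Y₂ : H), b X (brH Y₁ Y₂) = brH (b X Y₁) Y₂ + brH Y₁ (b X Y₂))
    (hskew : ∀ (X : G) (Y₁ Y₂ : H), ⟪b X Y₁, Y₂⟫ + ⟪Y₁, b X Y₂⟫ = 0)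
    (adTP : G × H → G × H → G × H)
    (hadTP : ∀ p q r : G × H,
      ⟪(adTP p q).1, r.1⟫ + ⟪(adTP p q).2, r.2⟫ =
        ⟪q.1, (sdBr brG brH b p r).1⟫ + ⟪q.2, (sdBr brG brH b p r).2⟫)
    (X₁ X₂ : G) (Y₁ Y₂ : H) :
    ⟪(curvR (sdBr brG brH b) adTP (X₁, Y₁) (X₂, Y₂) (X₂, Y₂)).1, X₁⟫
      + ⟪(curvR (sdBr brG brH b) adTP (X₁, Y₁) (X₂, Y₂) (X₂, Y₂)).2, Y₁⟫ =
      ⟪curvR (fun a c => brG a c) (fun a c => LinearMap.adjoint (brG a) c) X₁ X₂ X₂, X₁⟫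
        + ⟪curvR (fun a c => brH a c) (fun a c => LinearMap.adjoint (brH a) c) Y₁ Y₂ Y₂, Y₁⟫ := by
  classical
  have adj : ∀ (a c w : H), ⟪LinearMap.adjoint (brH a) c, w⟫ = ⟪c, brH a w⟫ := fun a c w =>
    LinearMap.adjoint_inner_left _ _ _
  have adjG : ∀ (a c w : G), ⟪LinearMap.adjoint (brG a) c, w⟫ = ⟪c, brG a w⟫ := fun a c w =>
    LinearMap.adjoint_inner_left _ _ _
  have h2 : ∀ p q : G × H,
      (adTP p q).2 = LinearMap.adjoint (brH p.2) q.2 - b p.1 q.2 := by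
    intro p q
    refine ext_inner_right ℝ fun w => ?_
    have h := hadTP p q (0, w)
    have h' := hskew p.1 q.2 w
    simp only [sdBr, map_zero, LinearMap.zero_apply, inner_zero_right, sub_zero,
      inner_add_right, zero_add] at h
    rw [inner_sub_left, adj]
    linarith
  have h1 : ∀ p q : G × H, (adTP p q).1 + (adTP q p).1 =
      LinearMap.adjoint (brG p.1) q.1 + LinearMap.adjoint (brG q.1) p.1 := by
    intro p q
    refine ext_inner_right ℝ fun w => ?_
    have h := hadTP p q (w, 0)
    have h' := hadTP q p (w, 0)
    have h'' := hskew w p.2 q.2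
    rw [real_inner_comm] at h''
    simp only [sdBr, map_zero, inner_zero_right, add_zero, zero_sub, inner_neg_right] at h h'
    rw [inner_add_left, inner_add_left, adjG, adjG]
    linarith
  set nG : G → G → G :=
    nablaR (fun a c => brG a c) (fun a c => LinearMap.adjoint (brG a) c) with hnG
  set nH : H → H → H :=
    nablaR (fun a c => brH a c) (fun a c => LinearMap.adjoint (brH a) c) with hnH
  have key : ∀ p q : G × H, nablaR (sdBr brG brH b) adTP p q =
      (nG p.1 q.1, nH p.2 q.2 - b p.1 q.2) := by
    intro p q
    refine Prod.ext ?_ ?_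
    · have h := h1 p q
      simp only [hnG, nablaR, sdBr, Prod.fst_add, Prod.fst_sub, Prod.smul_fst]
      rw [← smul_add, ← smul_add, h]
    · simp only [hnH, nablaR, sdBr, Prod.snd_add, Prod.snd_sub, Prod.smul_snd, h2]
      module
  have addL : ∀ a a' c : H, nH (a + a') c = nH a c + nH a' c := by
    intro a a' c
    simp only [hnH, nablaR, map_add, LinearMap.add_apply]
    module
  have subL : ∀ a a' c : H, nH (a - a') c = nH a c - nH a' c := by
    intro a a' c
    simp only [hnH, nablaR, map_sub, LinearMap.sub_apply]
    module
  have subR : ∀ a c c' : H, nH a (c - c') = nH a c - nH a c' := by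
    intro a c c'
    simp only [hnH, nablaR, map_sub, LinearMap.sub_apply]
    module
  have badj : ∀ (X : G) (a c : H), b X (LinearMap.adjoint (brH a) c) =
      LinearMap.adjoint (brH (b X a)) c + LinearMap.adjoint (brH a) (b X c) := by
    intro X a c
    refine ext_inner_right ℝ fun w => ?_
    have e1 := hskew X (LinearMap.adjoint (brH a) c) w
    have e2 := hskew X c (brH a w)
    rw [adj] at e1
    rw [hbder, inner_add_right] at e2
    rw [inner_add_left, adj, adj]
    linarith
  have bn : ∀ (X : G) (a c : H), b X (nH a c) = nH (b X a) c + nH a (b X c) := by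
    intro X a c
    simp only [hnH, nablaR, map_sub, map_add, map_smul, badj, hbder]
    module
  have F : curvR (sdBr brG brH b) adTP (X₁, Y₁) (X₂, Y₂) (X₂, Y₂) =
      (curvR (fun a c => brG a c) (fun a c => LinearMap.adjoint (brG a) c) X₁ X₂ X₂,
       curvR (fun a c => brH a c) (fun a c => LinearMap.adjoint (brH a) c) Y₁ Y₂ Y₂) := by
    simp only [curvR, key]
    rw [← hnG, ← hnH]
    refine Prod.ext ?_ ?_
    · simp [sdBr]
    · simp only [sdBr, Prod.snd_add, Prod.snd_sub, addL, subL, subR, bn, hbhom, map_sub,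
        LinearMap.sub_apply, LinearMap.comp_apply]
      abel
  rw [F]
end
end

section
/- Let 𝔤 be a finite-dimensional real Lie algebra and V a finite-dimensional real inner product space, regarded as an abelian Lie algebra, with b : 𝔤 → End(V) a Lie algebra homomorphism (a representation of 𝔤 on V). A differentiable curve (u,v) : ℝ → 𝔤 × V satisfies the geodesic equation (u,v)' = −ad(u,v)ᵀ(u,v) of the right-invariant metric on the semidirect product 𝔤 ⋉ V if and only if u'(t) = −ad(u(t))ᵀu(t) + h(v(t),v(t)) and v'(t) = −b(u(t))ᵀv(t) for all t. -/
open scoped RealInnerProductSpace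

noncomputable section

/-- Geodesic equation for a linear action: on `𝔤 ⋉ V` (with `V` abelian),
`u_t = −ad(u)ᵀu + h(v,v)`, `v_t = −b(u)ᵀv`. -/
theorem linear_action_geodesic_equation
    {G V : Type*}
    [NormedAddCommGroup G] [InnerProductSpace ℝ G] [FiniteDimensional ℝ G]
    [NormedAddCommGroup V] [InnerProductSpace ℝ V] [FiniteDimensional ℝ V]
    (brG : G →ₗ[ℝ] G →ₗ[ℝ] G)
    (hGalt : ∀ X : G, brG X X = 0)
    (hGjac : ∀ X Y Z : G, brG X (brG Y Z) + brG Y (brG Z X) + brG Z (brG X Y) = 0)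
    (b : G →ₗ[ℝ] V →ₗ[ℝ] V)
    (hbhom : ∀ X₁ X₂ : G, b (brG X₁ X₂) = b X₁ ∘ₗ b X₂ - b X₂ ∘ₗ b X₁)
    (h : V → V → G)
    (hh : ∀ (v₁ v₂ : V) (X : G), ⟪h v₁ v₂, X⟫ = ⟪b X v₁, v₂⟫)
    (adTP : G × V → G × V → G × V)
    (hadTP : ∀ p q r : G × V,
      ⟪(adTP p q).1, r.1⟫ + ⟪(adTP p q).2, r.2⟫ =
        ⟪q.1, brG p.1 r.1⟫ + ⟪q.2, b p.1 r.2 - b r.1 p.2⟫)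
    (u : ℝ → G) (v : ℝ → V) (hu : Differentiable ℝ u) (hv : Differentiable ℝ v) :
    (∀ t : ℝ, deriv (fun s => (u s, v s)) t = - adTP (u t, v t) (u t, v t)) ↔
      ((∀ t : ℝ, deriv u t = - LinearMap.adjoint (brG (u t)) (u t) + h (v t) (v t)) ∧
        (∀ t : ℝ, deriv v t = - LinearMap.adjoint (b (u t)) (v t))) := by
  have h1 : ∀ t, (adTP (u t, v t) (u t, v t)).1 =
      LinearMap.adjoint (brG (u t)) (u t) - h (v t) (v t) := by
    intro t
    refine ext_inner_right ℝ fun X => ?_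
    have e := hadTP (u t, v t) (u t, v t) (X, 0)
    simp only [inner_zero_right, add_zero, map_zero, zero_sub, inner_neg_right] at e
    rw [e, inner_sub_left, LinearMap.adjoint_inner_left, hh, real_inner_comm (v t)]
    ring
  have h2 : ∀ t, (adTP (u t, v t) (u t, v t)).2 = LinearMap.adjoint (b (u t)) (v t) := by
    intro t
    refine ext_inner_right ℝ fun w => ?_
    have e := hadTP (u t, v t) (u t, v t) (0, w)
    simp only [inner_zero_right, zero_add, map_zero, LinearMap.zero_apply, sub_zero] at e
    rw [e, LinearMap.adjoint_inner_left]
  have h3 : ∀ t, deriv (fun s => (u s, v s)) t = (deriv u t, deriv v t) := fun t =>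
    ((hu t).hasDerivAt.prodMk (hv t).hasDerivAt).deriv
  rw [← forall_and]
  refine forall_congr' fun t => ?_
  rw [h3, Prod.ext_iff, Prod.fst_neg, Prod.snd_neg, h1, h2, neg_sub, sub_eq_neg_add]
end
end

section
/- Let 𝔤 be a finite-dimensional real Lie algebra and V a finite-dimensional real inner product space, regarded as an abelian Lie algebra, with b : 𝔤 → End(V) a Lie algebra homomorphism such that each b(X) is skew-adjoint. Then a differentiable curve (u,v) : ℝ → 𝔤 × V satisfies the geodesic equation (u,v)' = −ad(u,v)ᵀ(u,v) of the right-invariant metric on 𝔤 ⋉ V if and only if u'(t) = −ad(u(t))ᵀu(t) and v'(t) = b(u(t))v(t) for all t. -/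
open scoped RealInnerProductSpace

noncomputable section

/-- Geodesic equation for an isometric linear action: on `𝔤 ⋉ V` with each
`b(X)` skew-adjoint, `u_t = −ad(u)ᵀu`, `v_t = b(u)v`. -/
theorem linear_action_geodesic_equation_isometric
    {G V : Type*}
    [NormedAddCommGroup G] [InnerProductSpace ℝ G] [FiniteDimensional ℝ G]
    [NormedAddCommGroup V] [InnerProductSpace ℝ V] [FiniteDimensional ℝ V]
    (brG : G →ₗ[ℝ] G →ₗ[ℝ] G)
    (hGalt : ∀ X : G, brG X X = 0)
    (hGjac : ∀ X Y Z : G, brG X (brG Y Z) + brG Y (brG Z X) + brG Z (brG X Y) = 0)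
    (b : G →ₗ[ℝ] V →ₗ[ℝ] V)
    (hbhom : ∀ X₁ X₂ : G, b (brG X₁ X₂) = b X₁ ∘ₗ b X₂ - b X₂ ∘ₗ b X₁)
    (hskew : ∀ (X : G) (v₁ v₂ : V), ⟪b X v₁, v₂⟫ + ⟪v₁, b X v₂⟫ = 0)
    (adTP : G × V → G × V → G × V)
    (hadTP : ∀ p q r : G × V,
      ⟪(adTP p q).1, r.1⟫ + ⟪(adTP p q).2, r.2⟫ =
        ⟪q.1, brG p.1 r.1⟫ + ⟪q.2, b p.1 r.2 - b r.1 p.2⟫)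
    (u : ℝ → G) (v : ℝ → V) (hu : Differentiable ℝ u) (hv : Differentiable ℝ v) :
    (∀ t : ℝ, deriv (fun s => (u s, v s)) t = - adTP (u t, v t) (u t, v t)) ↔
      ((∀ t : ℝ, deriv u t = - LinearMap.adjoint (brG (u t)) (u t)) ∧
        (∀ t : ℝ, deriv v t = b (u t) (v t))) := by
  have key : ∀ t, adTP (u t, v t) (u t, v t)
      = (LinearMap.adjoint (brG (u t)) (u t), - b (u t) (v t)) := by
    intro t
    refine Prod.ext ?_ ?_
    · refine ext_inner_right ℝ fun X => ?_
      have h := hadTP (u t, v t) (u t, v t) (X, 0)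
      have h2 := hskew X (v t) (v t)
      rw [real_inner_comm] at h2
      simp only [inner_zero_right, map_zero, zero_sub, inner_neg_right] at h
      rw [LinearMap.adjoint_inner_left]
      linarith
    · refine ext_inner_right ℝ fun w => ?_
      have h := hadTP (u t, v t) (u t, v t) (0, w)
      have h2 := hskew (u t) (v t) w
      simp only [inner_zero_right, map_zero, LinearMap.zero_apply, sub_zero] at h
      simp only [inner_neg_left]
      linarith
  have hd : ∀ t, deriv (fun s => (u s, v s)) t = (deriv u t, deriv v t) := fun t =>
    ((hu t).hasDerivAt.prodMk (hv t).hasDerivAt).deriv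
  simp only [key, hd, Prod.neg_mk, neg_neg, Prod.mk.injEq, forall_and]
end
end

section
/- Let 𝔤 be a finite-dimensional real Lie algebra with an inner product, and consider the semidirect product 𝔤 ⋉ 𝔤 with action b(X) = ad(X) (conjugation). A differentiable curve (u,v) : ℝ → 𝔤 × 𝔤 satisfies the geodesic equation (u,v)' = −ad(u,v)ᵀ(u,v) of the right-invariant metric on 𝔤 ⋉ 𝔤 if and only if u'(t) = −ad(u(t))ᵀu(t) − ad(v(t))ᵀv(t) and v'(t) = −ad(v(t))ᵀv(t) − ad(u(t))ᵀv(t) for all t. -/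
open scoped RealInnerProductSpace

noncomputable section

/-- Geodesic equation on the semidirect product `𝔤 ⋉ 𝔤` for the conjugation
action: `u_t = −ad(u)ᵀu − ad(v)ᵀv`, `v_t = −ad(v)ᵀv − ad(u)ᵀv`. -/
theorem conjugation_geodesic_equation
    {G : Type*} [NormedAddCommGroup G] [InnerProductSpace ℝ G] [FiniteDimensional ℝ G]
    (brG : G →ₗ[ℝ] G →ₗ[ℝ] G)
    (hGalt : ∀ X : G, brG X X = 0)
    (hGjac : ∀ X Y Z : G, brG X (brG Y Z) + brG Y (brG Z X) + brG Z (brG X Y) = 0)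
    (adTP : G × G → G × G → G × G)
    (hadTP : ∀ p q r : G × G,
      ⟪(adTP p q).1, r.1⟫ + ⟪(adTP p q).2, r.2⟫ =
        ⟪q.1, brG p.1 r.1⟫ + ⟪q.2, brG p.2 r.2 + brG p.1 r.2 - brG r.1 p.2⟫)
    (u v : ℝ → G) (hu : Differentiable ℝ u) (hv : Differentiable ℝ v) :
    (∀ t : ℝ, deriv (fun s => (u s, v s)) t = - adTP (u t, v t) (u t, v t)) ↔
      ((∀ t : ℝ, deriv u t =
          - LinearMap.adjoint (brG (u t)) (u t) - LinearMap.adjoint (brG (v t)) (v t)) ∧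
        (∀ t : ℝ, deriv v t =
          - LinearMap.adjoint (brG (v t)) (v t) - LinearMap.adjoint (brG (u t)) (v t))) := by
  have hskew : ∀ X Y : G, brG X Y = - brG Y X := by
    intro X Y
    have h := hGalt (X + Y)
    simp only [map_add, LinearMap.add_apply, hGalt, zero_add, add_zero] at h
    first
      | exact eq_neg_of_add_eq_zero_left h
      | exact eq_neg_of_add_eq_zero_right h
  have h1 : ∀ x y : G, (adTP (x, y) (x, y)).1 =
      LinearMap.adjoint (brG x) x + LinearMap.adjoint (brG y) y := by
    intro x y
    refine ext_inner_right ℝ fun w => ?_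
    have h := hadTP (x, y) (x, y) (w, 0)
    simp only [inner_zero_right, map_zero, add_zero, zero_sub, hskew w y, neg_neg] at h
    rw [h, inner_add_left, LinearMap.adjoint_inner_left, LinearMap.adjoint_inner_left]
  have h2 : ∀ x y : G, (adTP (x, y) (x, y)).2 =
      LinearMap.adjoint (brG y) y + LinearMap.adjoint (brG x) y := by
    intro x y
    refine ext_inner_right ℝ fun w => ?_
    have h := hadTP (x, y) (x, y) (0, w)
    simp only [inner_zero_right, map_zero, LinearMap.zero_apply, zero_add, sub_zero] at h
    rw [h, inner_add_left, LinearMap.adjoint_inner_left, LinearMap.adjoint_inner_left,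
      inner_add_right]
  have hd : ∀ t, deriv (fun s => (u s, v s)) t = (deriv u t, deriv v t) := fun t =>
    ((hu t).hasDerivAt.prodMk (hv t).hasDerivAt).deriv
  rw [← forall_and]
  refine forall_congr' fun t => ?_
  rw [hd, Prod.ext_iff, Prod.fst_neg, Prod.snd_neg, h1, h2, neg_add, neg_add,
    ← sub_eq_add_neg, ← sub_eq_add_neg]
end
end

section
/- Let 𝔤 be a finite-dimensional real Lie algebra with an Ad-invariant inner product, i.e. ⟨[X,Y],Z⟩ + ⟨Y,[X,Z]⟩ = 0 for all X,Y,Z ∈ 𝔤, and consider the semidirect product 𝔤 ⋉ 𝔤 with action b(X) = ad(X) (conjugation). Then a differentiable curve (u,v) : ℝ → 𝔤 × 𝔤 satisfies the geodesic equation (u,v)' = −ad(u,v)ᵀ(u,v) of the right-invariant metric on 𝔤 ⋉ 𝔤 if and only if u'(t) = 0 and v'(t) = [u(t),v(t)] for all t. -/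
open scoped RealInnerProductSpace

noncomputable section

/-- For an Ad-invariant inner product, the geodesic equation on `𝔤 ⋉ 𝔤`
(conjugation action) becomes `u_t = 0`, `v_t = [u,v]`. -/
theorem conjugation_geodesic_equation_ad_invariant
    {G : Type*} [NormedAddCommGroup G] [InnerProductSpace ℝ G] [FiniteDimensional ℝ G]
    (brG : G →ₗ[ℝ] G →ₗ[ℝ] G)
    (hGalt : ∀ X : G, brG X X = 0)
    (hGjac : ∀ X Y Z : G, brG X (brG Y Z) + brG Y (brG Z X) + brG Z (brG X Y) = 0)
    (hinv : ∀ X Y Z : G, ⟪brG X Y, Z⟫ + ⟪Y, brG X Z⟫ = 0)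
    (adTP : G × G → G × G → G × G)
    (hadTP : ∀ p q r : G × G,
      ⟪(adTP p q).1, r.1⟫ + ⟪(adTP p q).2, r.2⟫ =
        ⟪q.1, brG p.1 r.1⟫ + ⟪q.2, brG p.2 r.2 + brG p.1 r.2 - brG r.1 p.2⟫)
    (u v : ℝ → G) (hu : Differentiable ℝ u) (hv : Differentiable ℝ v) :
    (∀ t : ℝ, deriv (fun s => (u s, v s)) t = - adTP (u t, v t) (u t, v t)) ↔
      ((∀ t : ℝ, deriv u t = 0) ∧ (∀ t : ℝ, deriv v t = brG (u t) (v t))) := by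
  have key : ∀ a b : G, adTP (a, b) (a, b) = (0, - brG a b) := by
    intro a b
    refine Prod.ext ?_ ?_
    · refine ext_inner_right ℝ fun r => ?_
      have h := hadTP (a, b) (a, b) (r, 0)
      have h1 := hinv a a r
      have h2 := hinv r b b
      rw [real_inner_comm] at h2
      simp only [hGalt, inner_zero_left, inner_zero_right, map_zero, zero_add, zero_sub,
        inner_neg_right, add_zero] at h h1 ⊢
      linarith
    · refine ext_inner_right ℝ fun r => ?_
      have h := hadTP (a, b) (a, b) (0, r)
      have h1 := hinv a b r
      have h2 := hinv b b r
      simp only [hGalt, inner_zero_left, inner_zero_right, map_zero, zero_add, sub_zero,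
        inner_neg_left, inner_add_right, LinearMap.zero_apply] at h h1 h2 ⊢
      linarith
  have hd : ∀ t, deriv (fun s => (u s, v s)) t = (deriv u t, deriv v t) := fun t =>
    ((hu t).hasDerivAt.prodMk (hv t).hasDerivAt).deriv
  simp only [hd, key, Prod.neg_mk, neg_zero, neg_neg, Prod.mk.injEq, forall_and]
end
end

section
/- Let 𝔤 be a finite-dimensional real Lie algebra with an inner product and let 𝔤 ⋉ 𝔤* be its magnetic extension (semidirect product with the coadjoint action ad*, 𝔤* carrying the inner product transported via A). A differentiable pair of curves u, v : ℝ → 𝔤 is such that (u, A∘v) satisfies the geodesic equation (u,A∘v)' = −ad(u,A∘v)ᵀ(u,A∘v) of the right-invariant metric on 𝔤 ⋉ 𝔤* if and only if u'(t) = −ad(u(t))ᵀu(t) + ad(v(t))ᵀv(t) and v'(t) = [u(t),v(t)] for all t. -/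
open scoped RealInnerProductSpace

noncomputable section

/-- Geodesic equation on the magnetic extension `𝔤 ⋉ 𝔤*` (Proposition 5):
for the right logarithmic derivative `(u, A(v))`,
`u_t = −ad(u)ᵀu + ad(v)ᵀv`, `v_t = [u,v]`. -/
theorem magnetic_extension_geodesic_equation
    {G : Type*} [NormedAddCommGroup G] [InnerProductSpace ℝ G] [FiniteDimensional ℝ G]
    (brG : G →ₗ[ℝ] G →ₗ[ℝ] G)
    (hGalt : ∀ X : G, brG X X = 0)
    (hGjac : ∀ X Y Z : G, brG X (brG Y Z) + brG Y (brG Z X) + brG Z (brG X Y) = 0)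
    (A : G ≃ₗ[ℝ] (G →L[ℝ] ℝ))
    (hA : ∀ X Y : G, A X Y = ⟪X, Y⟫)
    (ipStar : (G →L[ℝ] ℝ) → (G →L[ℝ] ℝ) → ℝ)
    (hip : ∀ a₁ a₂ : G →L[ℝ] ℝ, ipStar a₁ a₂ = ⟪A.symm a₁, A.symm a₂⟫)
    (coad : G → (G →L[ℝ] ℝ) → (G →L[ℝ] ℝ))
    (hcoad : ∀ (X : G) (a : G →L[ℝ] ℝ) (Z : G), coad X a Z = - a (brG X Z))
    (adTP : G × (G →L[ℝ] ℝ) → G × (G →L[ℝ] ℝ) → G × (G →L[ℝ] ℝ))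
    (hadTP : ∀ p q r : G × (G →L[ℝ] ℝ),
      ⟪(adTP p q).1, r.1⟫ + ipStar (adTP p q).2 r.2 =
        ⟪q.1, brG p.1 r.1⟫ + ipStar q.2 (coad p.1 r.2 - coad r.1 p.2))
    (u v : ℝ → G) (hu : Differentiable ℝ u) (hv : Differentiable ℝ v) :
    (∀ t : ℝ, deriv (fun s => (u s, A (v s))) t = - adTP (u t, A (v t)) (u t, A (v t))) ↔
      ((∀ t : ℝ, deriv u t =
          - LinearMap.adjoint (brG (u t)) (u t) + LinearMap.adjoint (brG (v t)) (v t)) ∧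
        (∀ t : ℝ, deriv v t = brG (u t) (v t))) := by
  have hsym : ∀ (w : G) (b : G →L[ℝ] ℝ), ⟪w, A.symm b⟫ = b w := by
    intro w b
    rw [real_inner_comm, ← hA, A.apply_symm_apply]
  have hskew : ∀ X Y : G, brG X Y = - brG Y X := by
    intro X Y
    have h := hGalt (X + Y)
    simp only [map_add, LinearMap.add_apply, hGalt, zero_add, add_zero] at h
    rw [add_comm] at h
    exact eq_neg_of_add_eq_zero_left h
  have key : ∀ x y : G, adTP (x, A y) (x, A y) =
      (LinearMap.adjoint (brG x) x - LinearMap.adjoint (brG y) y, - A (brG x y)) := by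
    intro x y
    have h := hadTP (x, A y) (x, A y)
    simp only [hip, LinearEquiv.symm_apply_apply, hsym, sub_apply, hcoad] at h
    refine Prod.ext ?_ ?_
    · refine ext_inner_right ℝ fun Y => ?_
      have h1 := h (Y, 0)
      simp only [ContinuousLinearMap.sub_apply, hcoad, hA, hskew Y y] at h1
      simp only [inner_sub_left, LinearMap.adjoint_inner_left]
      simpa [sub_eq_add_neg] using h1
    · apply A.symm.injective
      refine ext_inner_right ℝ fun Z => ?_
      have h1 := h (0, A Z)
      simp only [ContinuousLinearMap.sub_apply, hcoad, hA] at h1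
      simpa [real_inner_comm, hA] using h1
  have hd : ∀ t, deriv (fun s => (u s, A (v s))) t = (deriv u t, A (deriv v t)) := by
    intro t
    have h2 : HasDerivAt (fun s => A (v s)) (A (deriv v t)) t :=
      (LinearMap.toContinuousLinearMap (A : G →ₗ[ℝ] (G →L[ℝ] ℝ))).hasFDerivAt.comp_hasDerivAt t
        (hv t).hasDerivAt
    exact ((hu t).hasDerivAt.prodMk h2).deriv
  rw [← forall_and]
  refine forall_congr' fun t => ?_
  rw [hd, key, Prod.neg_mk, Prod.mk.injEq, neg_neg, A.injective.eq_iff, neg_sub, neg_add_eq_sub]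
end
end
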